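/- Suppose that, for n prisoners, r rooms and q states, the prisoners have a symmetric leader-election strategy, i.e. a symmetric strategy (in which, instead of declaring, a prisoner may designate themselves leader) such that for every schedule exactly one prisoner at some point designates themselves leader. Then the n prisoners have a symmetric winning strategy for r rooms with q + 4 states. -/

import Mathlib

namespace PrisonersGame

/-- A deterministic strategy for a prisoner: given the list of states observed
on previous visits and the state observed on the current visit, return the
state to leave the room in and whether to declare. -/
def Strategy : Type := List ℕ → ℕ → ℕ × Bool

/-- A strategy is valid for `q` states if, whenever all states observed so far
are among `0, …, q-1`, the state it leaves the room in is among `0, …, q-1`. -/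
def Strategy.ValidFor (q : ℕ) (σ : Strategy) : Prop :=
  ∀ (h : List ℕ) (s : ℕ), (∀ x ∈ h, x < q) → s < q → (σ h s).1 < q

/-- A schedule: at each time step, one prisoner is led into one room. -/
def Schedule (n r : ℕ) : Type := ℕ → Fin n × Fin r

/-- A schedule is fair if every prisoner is led into every room infinitely often. -/
def Schedule.Fair {n r : ℕ} (sched : Schedule n r) : Prop :=
  ∀ (p : Fin n) (room : Fin r), {t : ℕ | sched t = (p, room)}.Infinite

/-- The state of play just before step `t`: the current states of the rooms, and
the list of states observed so far by each prisoner. All rooms start in state `0`. -/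
def run {n r : ℕ} (strat : Fin n → Strategy) (sched : Schedule n r) :
    ℕ → (Fin r → ℕ) × (Fin n → List ℕ)
  | 0 => (fun _ => 0, fun _ => [])
  | t + 1 =>
      let prev := run strat sched t
      let p := (sched t).1
      let room := (sched t).2
      let obs := prev.1 room
      (Function.update prev.1 room (strat p (prev.2 p) obs).1,
        Function.update prev.2 p (prev.2 p ++ [obs]))

/-- The prisoner visiting at step `t` declares during that visit. -/
def declaresAt {n r : ℕ} (strat : Fin n → Strategy) (sched : Schedule n r)
    (t : ℕ) : Prop :=
  (strat (sched t).1 ((run strat sched t).2 (sched t).1)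
      ((run strat sched t).1 (sched t).2)).2 = true

/-- Every prisoner has visited every room by step `t` (inclusive). -/
def allVisitedBy {n r : ℕ} (sched : Schedule n r) (t : ℕ) : Prop :=
  ∀ (p : Fin n) (room : Fin r), ∃ s ≤ t, sched s = (p, room)

/-- A strategy profile is winning if, for every fair schedule, some prisoner
eventually declares, and no prisoner ever declares at a time before every
prisoner has visited every room. -/
def Winning {n r : ℕ} (strat : Fin n → Strategy) : Prop :=
  ∀ sched : Schedule n r, sched.Fair →
    (∃ t, declaresAt strat sched t) ∧
    ∀ t, declaresAt strat sched t → allVisitedBy sched t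

/-- `n` prisoners have a winning strategy for `r` rooms with `q` states. -/
def HasWinningStrategy (n r q : ℕ) : Prop :=
  ∃ strat : Fin n → Strategy, (∀ p, (strat p).ValidFor q) ∧ Winning (n := n) (r := r) strat

/-- `n` prisoners have a symmetric winning strategy (all prisoners use the
same strategy) for `r` rooms with `q` states. -/
def HasSymmetricWinningStrategy (n r q : ℕ) : Prop :=
  ∃ σ : Strategy, σ.ValidFor q ∧ Winning (n := n) (r := r) (fun _ => σ)

end PrisonersGame

namespace PrisonersGame

/-- A symmetric leader-election strategy: a single strategy, used by all
prisoners, in which the boolean output is interpreted as designating oneself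
leader (rather than declaring), such that for every fair schedule exactly one
prisoner at some point designates themselves leader. -/
def IsLeaderElection (n r : ℕ) (σ : Strategy) : Prop :=
  ∀ sched : Schedule n r, sched.Fair →
    ∃! p : Fin n, ∃ t : ℕ, (sched t).1 = p ∧
      declaresAt (n := n) (r := r) (fun _ => σ) sched t

end PrisonersGame

namespace PrisonersGame.Proto

/-- Modes of a prisoner in the four-state protocol. -/
inductive Mode
  | normal | up | down | leader | final

/-- Local memory of a prisoner. -/
structure Loc where
  h : ℤ
  s : ℤ
  z : ℤ
  mode : Mode

/-- Parameters of the protocol. -/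
structure Par where
  n : ℤ
  r : ℤ
  Y : ℤ
  c : ℤ

/-- The final `z`-value of the leader. -/
def Par.zmin (P : Par) : ℤ := P.r - (P.n - 1) * (P.r + 1)

def hv (P : Par) (x : ℕ) : ℤ := if x = 0 then P.Y else if x = 2 then 1 else 0
def sv (x : ℕ) : ℤ := if x = 3 then 1 else 0
def zv (x : ℕ) : ℤ := if x = 0 then 1 else 0

/-- The new room state and the new (preliminary) mode. -/
def act (P : Par) (l : Loc) (x : ℕ) : ℕ × Mode :=
  match l.mode with
  | .normal =>
      if x = 0 then
        (if l.z < P.r then (1, .normal) else if l.z = P.r then (3, .up) else (x, .normal))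
      else if x = 1 then
        (if P.c < l.h then (2, .normal) else if l.h = P.c ∧ 0 < l.s then (3, .normal)
          else (x, .normal))
      else if x = 2 ∨ x = 3 then (if l.h < P.c then (1, .normal) else (x, .normal))
      else (x, .normal)
  | .up => if x = 1 then (3, .up) else (x, .up)
  | .down => if x = 3 then (1, .down) else (x, .down)
  | .leader =>
      if x = 1 then
        (if l.h = P.c - 1 then (if P.zmin < l.z then (0, .leader) else (3, .final))
          else (x, .leader))
      else if x = 2 then (1, .leader) else (x, .leader)
  | .final => if x = 1 then (3, .final) else (x, .final)

def upd (P : Par) (l : Loc) (x w : ℕ) (m : Mode) : Loc :=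
  ⟨l.h + hv P x - hv P w, l.s + sv x - sv w, l.z + zv x - zv w, m⟩

open Classical in
noncomputable def post (P : Par) (l : Loc) : Loc :=
  { l with mode := match l.mode with
    | .normal => if l.h = P.c - 1 ∧ l.s = P.n then .leader else .normal
    | .up => if l.s = - P.r then .down else .up
    | .down => if l.s = 0 then .normal else .down
    | .leader => .leader
    | .final => .final }

noncomputable def stepL (P : Par) (l : Loc) (x : ℕ) : Loc × ℕ :=
  if (act P l x).1 = x then (l, x)
  else (post P (upd P l x (act P l x).1 (act P l x).2), (act P l x).1)

/-- The effective steps. -/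
inductive Step (P : Par) : Loc → ℕ → Loc → ℕ → Prop
  | claim (h s z : ℤ) : z < P.r → Step P ⟨h, s, z, .normal⟩ 0 (post P ⟨h + P.Y, s, z + 1, .normal⟩) 1
  | tour (h s z : ℤ) : z = P.r → Step P ⟨h, s, z, .normal⟩ 0 (post P ⟨h + P.Y, s - 1, z + 1, .up⟩) 3
  | drop (h s z : ℤ) : P.c < h → Step P ⟨h, s, z, .normal⟩ 1 ⟨h - 1, s, z, .normal⟩ 2
  | emit (h s z : ℤ) : h = P.c → 0 < s → Step P ⟨h, s, z, .normal⟩ 1 ⟨h, s - 1, z, .normal⟩ 3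
  | grab (h s z : ℤ) : h < P.c → Step P ⟨h, s, z, .normal⟩ 2 (post P ⟨h + 1, s, z, .normal⟩) 1
  | absorb (h s z : ℤ) : h < P.c → Step P ⟨h, s, z, .normal⟩ 3 (post P ⟨h, s + 1, z, .normal⟩) 1
  | ups (h s z : ℤ) : Step P ⟨h, s, z, .up⟩ 1 (post P ⟨h, s - 1, z, .up⟩) 3
  | downs (h s z : ℤ) : Step P ⟨h, s, z, .down⟩ 3 (post P ⟨h, s + 1, z, .down⟩) 1
  | lemit (h s z : ℤ) : h = P.c - 1 → P.zmin < z →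
      Step P ⟨h, s, z, .leader⟩ 1 ⟨h - P.Y, s, z - 1, .leader⟩ 0
  | lfin (h s z : ℤ) : h = P.c - 1 → z ≤ P.zmin →
      Step P ⟨h, s, z, .leader⟩ 1 ⟨h, s - 1, z, .final⟩ 3
  | lgrab (h s z : ℤ) : Step P ⟨h, s, z, .leader⟩ 2 ⟨h + 1, s, z, .leader⟩ 1
  | fs (h s z : ℤ) : Step P ⟨h, s, z, .final⟩ 1 ⟨h, s - 1, z, .final⟩ 3

theorem stepL_cases (P : Par) (l : Loc) (x : ℕ) :
    stepL P l x = (l, x) ∨ Step P l x (stepL P l x).1 (stepL P l x).2 := by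
  by_cases hx : (act P l x).1 = x
  · left; simp [stepL, hx]
  right
  have e : stepL P l x = (post P (upd P l x (act P l x).1 (act P l x).2), (act P l x).1) := by
    simp [stepL, hx]
  rw [e]
  clear e
  revert hx
  obtain ⟨h, s, z, m⟩ := l
  cases m
  · simp only [act]
    split_ifs with h1 h2 h3 h4 h5 h6 h7 h8 <;> intro hx
    · subst h1
      simpa [upd, hv, sv, zv] using Step.claim h s z h2
    · subst h1
      simpa [upd, hv, sv, zv] using Step.tour h s z h3
    · exact absurd rfl hx
    · subst h4
      have := Step.drop (P := P) h s z h5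
      have e : ¬ (h = P.c ∧ s = P.n) := by omega
      simpa [upd, hv, sv, zv, post, e] using this
    · subst h4
      have := Step.emit (P := P) h s z h6.1 h6.2
      have e : ¬ (h = P.c - 1 ∧ s - 1 = P.n) := by omega
      simpa [upd, hv, sv, zv, post, e] using this
    · exact absurd rfl hx
    · rcases h7 with h7 | h7 <;> subst h7
      · simpa [upd, hv, sv, zv] using Step.grab h s z h8
      · simpa [upd, hv, sv, zv] using Step.absorb h s z h8
    · exact absurd rfl hx
    · exact absurd rfl hx
  · simp only [act]
    split_ifs with h1 <;> intro hx
    · subst h1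
      simpa [upd, hv, sv, zv] using Step.ups h s z
    · exact absurd rfl hx
  · simp only [act]
    split_ifs with h1 <;> intro hx
    · subst h1
      simpa [upd, hv, sv, zv] using Step.downs h s z
    · exact absurd rfl hx
  · simp only [act]
    split_ifs with h1 h2 h3 h4 <;> intro hx
    · subst h1
      simpa [upd, hv, sv, zv, post] using Step.lemit h s z h2 h3
    · subst h1
      simpa [upd, hv, sv, zv, post] using Step.lfin h s z h2 (not_lt.1 h3)
    · exact absurd rfl hx
    · subst h4
      simpa [upd, hv, sv, zv, post] using Step.lgrab h s z
    · exact absurd rfl hx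
  · simp only [act]
    split_ifs with h1 <;> intro hx
    · subst h1
      simpa [upd, hv, sv, zv, post] using Step.fs h s z
    · exact absurd rfl hx

theorem step_conserve {P : Par} {l l' : Loc} {x w : ℕ} (st : Step P l x l' w) :
    l'.h + hv P w = l.h + hv P x ∧ l'.s + sv w = l.s + sv x ∧ l'.z + zv w = l.z + zv x
      ∧ x ≠ w ∧ w < 4 := by
  cases st <;> simp [post, hv, sv, zv]

theorem sum_upd {ι α : Type*} [Fintype ι] [DecidableEq ι] (L : ι → α) (F : α → ℤ) (p : ι) (l : α) :
    ∑ q, F (Function.update L p l q) = ∑ q, F (L q) - F (L p) + F l := by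
  have e : ∀ q, F (Function.update L p l q) = F (L q) + if q = p then F l - F (L p) else 0 := by
    intro q
    by_cases hq : q = p
    · subst hq; simp
    · simp [hq]
  simp only [e, Finset.sum_add_distrib]
  simp; ring

theorem sum_upd_nat {ι α : Type*} [Fintype ι] [DecidableEq ι] (L : ι → α) (F : α → ℕ) (p : ι)
    (l : α) : ∑ q, F (Function.update L p l q) + F (L p) = ∑ q, F (L q) + F l := by
  have := sum_upd L (fun a => (F a : ℤ)) p l
  have h2 : ((∑ q, F (Function.update L p l q) + F (L p) : ℕ) : ℤ)
      = ((∑ q, F (L q) + F l : ℕ) : ℤ) := by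
    push_cast; linarith
  exact_mod_cast h2

/-- lower bounds for sums -/
theorem sum_ge1 {n : ℕ} (f : Fin n → ℤ) (a : Fin n) (b : ℤ) (h : ∀ q, q ≠ a → b ≤ f q) :
    f a - b + n * b ≤ ∑ q, f q := by
  have : ∑ q : Fin n, (b + if q = a then f a - b else 0) ≤ ∑ q, f q := by
    apply Finset.sum_le_sum
    intro q _
    by_cases hq : q = a
    · subst hq; simp
    · simpa [hq] using h q hq
  rw [Finset.sum_add_distrib] at this
  simp at this
  linarith

theorem sum_ge2 {n : ℕ} (f : Fin n → ℤ) (a a' : Fin n) (haa : a' ≠ a) (b : ℤ)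
    (h : ∀ q, q ≠ a → b ≤ f q) :
    f a + f a' - 2 * b + n * b ≤ ∑ q, f q := by
  have : ∑ q : Fin n, ((b + if q = a then f a - b else 0) + if q = a' then f a' - b else 0)
      ≤ ∑ q, f q := by
    apply Finset.sum_le_sum
    intro q _
    by_cases hq : q = a
    · subst hq; simp [haa.symm]
    · by_cases hq' : q = a'
      · subst hq'; simp [haa]
      · simpa [hq, hq'] using h q hq
  rw [Finset.sum_add_distrib, Finset.sum_add_distrib] at this
  simp at this
  linarith

theorem sum_ge3 {n : ℕ} (f : Fin n → ℤ) (a a' a2 : Fin n) (haa : a' ≠ a) (haa2 : a2 ≠ a)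
    (haa3 : a' ≠ a2) (b : ℤ) (h : ∀ q, q ≠ a → b ≤ f q) :
    f a + f a' + f a2 - 3 * b + n * b ≤ ∑ q, f q := by
  have := sum_ge2 (Function.update f a' b) a a2 haa2 b (by
    intro q hq
    by_cases hq' : q = a'
    · subst hq'; simp
    · simpa [hq'] using h q hq)
  have h2 := sum_upd f id a' b
  simp only [id] at h2
  rw [h2] at this
  simp [haa.symm, haa3.symm] at this
  linarith

theorem sum_le1 {n : ℕ} (f : Fin n → ℤ) (a : Fin n) (b : ℤ) (h : ∀ q, q ≠ a → f q ≤ b) :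
    ∑ q, f q ≤ f a - b + n * b := by
  have := sum_ge1 (fun q => - f q) a (-b) (fun q hq => neg_le_neg (h q hq))
  simp at this
  linarith

theorem sum_le2 {n : ℕ} (f : Fin n → ℤ) (a a' : Fin n) (haa : a' ≠ a) (b : ℤ)
    (h : ∀ q, q ≠ a → f q ≤ b) :
    ∑ q, f q ≤ f a + f a' - 2 * b + n * b := by
  have := sum_ge2 (fun q => - f q) a a' haa (-b) (fun q hq => neg_le_neg (h q hq))
  simp at this
  linarith

theorem sum_room {r : ℕ} (f : Fin r → ℤ) (a : Fin r) (h : ∀ q, 0 ≤ f q) : f a ≤ ∑ q, f q :=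
  Finset.single_le_sum (fun q _ => h q) (Finset.mem_univ a)

theorem sv_nonneg (x : ℕ) : 0 ≤ sv x := by unfold sv; split_ifs <;> simp
theorem zv_nonneg (x : ℕ) : 0 ≤ zv x := by unfold zv; split_ifs <;> simp
theorem hv_nonneg {P : Par} (hY : 1 ≤ P.Y) (x : ℕ) : 0 ≤ hv P x := by
  unfold hv; split_ifs <;> omega

theorem all_three {r : ℕ} (R : Fin r → ℕ) (h : (r : ℤ) ≤ ∑ x, sv (R x)) (x : Fin r) : R x = 3 := by
  by_contra hx
  have := sum_le1 (fun x => sv (R x)) x 1 (by intro q _; unfold sv; split_ifs <;> simp)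
  simp [sv, hx] at this h
  omega

/-- Condition on a non-leader once a leader exists. -/
def QOther {r : ℕ} (P : Par) (l : Loc) (R : Fin r → ℕ) (V : Fin r → Prop) : Prop :=
  (l.mode = .normal ∧ l.s = 0 ∧ P.c ≤ l.h ∧ l.z ≤ P.r + 1 ∧ (l.z = P.r + 1 → ∀ x, V x)) ∨
  (l.mode = .up ∧ -P.r < l.s ∧ l.s < 0 ∧ P.c + P.Y ≤ l.h ∧ l.z = P.r + 1 ∧ ∀ x, R x = 3 → V x) ∨
  (l.mode = .down ∧ -P.r ≤ l.s ∧ l.s < 0 ∧ P.c + P.Y ≤ l.h ∧ l.z = P.r + 1 ∧ ∀ x, V x)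

/-- Condition on the leader. -/
def QLead {r : ℕ} (P : Par) (l : Loc) (R : Fin r → ℕ) (V : Fin r → Prop) : Prop :=
  (l.mode = .leader ∧ l.s = P.n ∧ P.zmin ≤ l.z ∧ P.c - 1 - P.Y ≤ l.h) ∨
  (l.mode = .final ∧ P.n - P.r ≤ l.s ∧ l.s < P.n ∧ P.c - 1 ≤ l.h ∧ l.z ≤ P.zmin ∧
    ∀ x, R x = 3 → V x)

/-- Condition on everybody during the election. -/
def QElec (P : Par) (l : Loc) : Prop :=
  l.mode = .normal ∧ 0 ≤ l.s ∧ 0 ≤ l.z ∧ (1 ≤ l.s ∨ P.c ≤ l.h) ∧ ¬ (l.h = P.c - 1 ∧ l.s = P.n)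

/-- The conservation laws. -/
structure Cons {n r : ℕ} (P : Par) (R : Fin r → ℕ) (L : Fin n → Loc) : Prop where
  lt : ∀ x, R x < 4
  hh : ∑ p, (L p).h + ∑ x, hv P (R x) = n * P.c - 1
  ss : ∑ p, (L p).s + ∑ x, sv (R x) = n
  zz : ∑ p, (L p).z + ∑ x, zv (R x) = r

def Inv2 {n r : ℕ} (P : Par) (R : Fin r → ℕ) (L : Fin n → Loc) (V : Fin n → Fin r → Prop)
    (a : Fin n) : Prop :=
  QLead P (L a) R (V a) ∧ ∀ p, p ≠ a → QOther P (L p) R (V p)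

structure Inv {n r : ℕ} (P : Par) (R : Fin r → ℕ) (L : Fin n → Loc) (V : Fin n → Fin r → Prop) :
    Prop where
  cons : Cons P R L
  ph : (∀ p, QElec P (L p)) ∨ ∃ a, Inv2 P R L V a

theorem QOther.mono {r : ℕ} {P : Par} {l : Loc} {R : Fin r → ℕ} {V W : Fin r → Prop}
    (h : QOther P l R V) (hVW : ∀ x, V x → W x) : QOther P l R W := by
  rcases h with ⟨h1, h2, h3, h4, h5⟩ | ⟨h1, h2, h3, h4, h5, h6⟩ | ⟨h1, h2, h3, h4, h5, h6⟩
  · exact Or.inl ⟨h1, h2, h3, h4, fun h x => hVW x (h5 h x)⟩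
  · exact Or.inr (Or.inl ⟨h1, h2, h3, h4, h5, fun x h => hVW x (h6 x h)⟩)
  · exact Or.inr (Or.inr ⟨h1, h2, h3, h4, h5, fun x => hVW x (h6 x)⟩)

theorem QLead.mono {r : ℕ} {P : Par} {l : Loc} {R : Fin r → ℕ} {V W : Fin r → Prop}
    (h : QLead P l R V) (hVW : ∀ x, V x → W x) : QLead P l R W := by
  rcases h with h | ⟨h1, h2, h3, h4, h5, h6⟩
  · exact Or.inl h
  · exact Or.inr ⟨h1, h2, h3, h4, h5, fun x h => hVW x (h6 x h)⟩

theorem QOther.hge {r : ℕ} {P : Par} {l : Loc} {R : Fin r → ℕ} {V : Fin r → Prop}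
    (h : QOther P l R V) (hY : 1 ≤ P.Y) : P.c ≤ l.h := by
  rcases h with ⟨h1, h2, h3, h4, h5⟩ | ⟨h1, h2, h3, h4, h5, h6⟩ | ⟨h1, h2, h3, h4, h5, h6⟩ <;> omega

theorem QOther.sle {r : ℕ} {P : Par} {l : Loc} {R : Fin r → ℕ} {V : Fin r → Prop}
    (h : QOther P l R V) : l.s ≤ 0 := by
  rcases h with ⟨h1, h2, h3, h4, h5⟩ | ⟨h1, h2, h3, h4, h5, h6⟩ | ⟨h1, h2, h3, h4, h5, h6⟩ <;> omega

theorem QOther.zle {r : ℕ} {P : Par} {l : Loc} {R : Fin r → ℕ} {V : Fin r → Prop}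
    (h : QOther P l R V) : l.z ≤ P.r + 1 := by
  rcases h with ⟨h1, h2, h3, h4, h5⟩ | ⟨h1, h2, h3, h4, h5, h6⟩ | ⟨h1, h2, h3, h4, h5, h6⟩ <;> omega

/-- If the room states `3` do not grow except at a visited room, `QOther` is kept. -/
theorem QOther.room {r : ℕ} {P : Par} {l : Loc} {R : Fin r → ℕ} {V : Fin r → Prop}
    (h : QOther P l R V) (x : Fin r) (w : ℕ) (hw : w = 3 → V x ∨ l.h < P.c + P.Y) :
    QOther P l (Function.update R x w) V := by
  rcases h with h | ⟨h1, h2, h3, h4, h5, h6⟩ | ⟨h1, h2, h3, h4, h5, h6⟩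
  · exact Or.inl h
  · refine Or.inr (Or.inl ⟨h1, h2, h3, h4, h5, fun y hy => ?_⟩)
    by_cases hyx : y = x
    · subst hyx
      simp at hy
      rcases hw hy with h | h
      · exact h
      · omega
    · rw [Function.update_of_ne hyx] at hy
      exact h6 y hy
  · exact Or.inr (Or.inr ⟨h1, h2, h3, h4, h5, h6⟩)

theorem QLead.room {r : ℕ} {P : Par} {l : Loc} {R : Fin r → ℕ} {V : Fin r → Prop}
    (h : QLead P l R V) (x : Fin r) (w : ℕ) (hw : w = 3 → V x ∨ l.h < P.c - 1) :
    QLead P l (Function.update R x w) V := by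
  rcases h with h | ⟨h1, h2, h3, h4, h5, h6⟩
  · exact Or.inl h
  · refine Or.inr ⟨h1, h2, h3, h4, h5, fun y hy => ?_⟩
    by_cases hyx : y = x
    · subst hyx
      simp at hy
      rcases hw hy with h | h
      · exact h
      · omega
    · rw [Function.update_of_ne hyx] at hy
      exact h6 y hy

section
variable {n r : ℕ} {P : Par} {R : Fin r → ℕ} {L : Fin n → Loc} {V : Fin n → Fin r → Prop}

theorem slack1 (hY : 1 ≤ P.Y) (C : Cons P R L) {a : Fin n} (I : ∀ p, p ≠ a → P.c ≤ (L p).h)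
    (x : Fin r) : hv P (R x) ≤ P.c - 1 - (L a).h := by
  have h1 := sum_ge1 (fun p => (L p).h) a P.c I
  have h2 := sum_room (fun x => hv P (R x)) x (fun q => hv_nonneg hY _)
  have := C.hh
  linarith

theorem slack2 (hY : 1 ≤ P.Y) (C : Cons P R L) {a : Fin n} (I : ∀ p, p ≠ a → P.c ≤ (L p).h)
    (x : Fin r) (p : Fin n) (hp : p ≠ a) :
    (L p).h - P.c + hv P (R x) ≤ P.c - 1 - (L a).h := by
  have h1 := sum_ge2 (fun p => (L p).h) a p hp P.c I
  have h2 := sum_room (fun x => hv P (R x)) x (fun q => hv_nonneg hY _)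
  have := C.hh
  linarith

theorem slack3 (hY : 1 ≤ P.Y) (C : Cons P R L) {a : Fin n} (I : ∀ p, p ≠ a → P.c ≤ (L p).h)
    (p : Fin n) (hp : p ≠ a) (p' : Fin n) (hp' : p' ≠ a) (hpp : p ≠ p') :
    (L p).h - P.c + (L p').h - P.c ≤ P.c - 1 - (L a).h := by
  have h1 := sum_ge3 (fun p => (L p).h) a p p' hp hp' hpp P.c I
  have h2 := Finset.sum_nonneg (s := Finset.univ) (f := fun x => hv P (R x))
    (fun q _ => hv_nonneg hY _)
  have := C.hh
  linarith

/-- all rooms in state 3 -/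
theorem full (C : Cons P R L) {a : Fin n} (I : ∀ p, p ≠ a → (L p).s ≤ 0)
    (h : (L a).s ≤ n - r) (x : Fin r) : R x = 3 := by
  apply all_three
  have h1 := sum_le1 (fun p => (L p).s) a 0 I
  have := C.ss
  linarith

theorem full2 (C : Cons P R L) {a : Fin n} (I : ∀ p, p ≠ a → (L p).s ≤ 0) (p : Fin n) (hp : p ≠ a)
    (h : (L a).s ≤ n) (h' : (L p).s ≤ - r) (x : Fin r) : R x = 3 := by
  apply all_three
  have h1 := sum_le2 (fun p => (L p).s) a p hp 0 I
  have := C.ss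
  linarith

/-- no room in state 3 -/
theorem no_three (C : Cons P R L) {a : Fin n} (I : ∀ p, p ≠ a → 0 ≤ (L p).s)
    (h : n ≤ (L a).s) (x : Fin r) : R x ≠ 3 := by
  intro hx
  have h1 := sum_ge1 (fun p => (L p).s) a 0 I
  have h2 := sum_room (fun x => sv (R x)) x (fun q => sv_nonneg _)
  have := C.ss
  have e : sv (R x) = 1 := by simp [sv, hx]
  rw [e] at h2
  linarith

theorem cons_step (C : Cons P R L) (p : Fin n) (x : Fin r) {l' : Loc} {w : ℕ}
    (st : Step P (L p) (R x) l' w) :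
    Cons P (Function.update R x w) (Function.update L p l') := by
  obtain ⟨h1, h2, h3, h4, h5⟩ := step_conserve st
  constructor
  · intro y
    by_cases hy : y = x
    · subst hy; simpa using h5
    · simpa [hy] using C.lt y
  · rw [sum_upd L (fun l => l.h), sum_upd R (fun x => hv P x)]
    linarith [C.hh]
  · rw [sum_upd L (fun l => l.s), sum_upd R (fun x => sv x)]
    linarith [C.ss]
  · rw [sum_upd L (fun l => l.z), sum_upd R (fun x => zv x)]
    linarith [C.zz]

/-- A freshly elected leader. -/
theorem elect (hY : 1 ≤ P.Y) (hn : P.n = n) (hr : P.r = r) (C : Cons P R L) (a : Fin n)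
    (hm : (L a).mode = .leader) (hh : (L a).h = P.c - 1) (hs : (L a).s = P.n) (hz : 0 ≤ (L a).z)
    (I : ∀ p, p ≠ a → QElec P (L p)) : Inv2 P R L V a := by
  have hs0 : ∀ p, p ≠ a → (L p).s = 0 := by
    intro p hp
    have h1 := sum_ge2 (fun p => (L p).s) a p hp 0 (fun q hq => (I q hq).2.1)
    have h2 := Finset.sum_nonneg (s := Finset.univ) (f := fun x => sv (R x))
      (fun q _ => sv_nonneg _)
    have := C.ss
    have h3 := (I p hp).2.1
    linarith
  have hc : ∀ p, p ≠ a → P.c ≤ (L p).h := by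
    intro p hp
    have := (I p hp).2.2.2.1
    have := hs0 p hp
    omega
  have hzr : ∀ p, p ≠ a → (L p).z ≤ P.r := by
    intro p hp
    have h1 := sum_ge2 (fun p => (L p).z) a p hp 0 (fun q hq => (I q hq).2.2.1)
    have h2 := Finset.sum_nonneg (s := Finset.univ) (f := fun x => zv (R x))
      (fun q _ => zv_nonneg _)
    have := C.zz
    linarith
  have hzv : ∀ x, zv (R x) = 0 := by
    intro x
    have := slack1 hY C hc x
    unfold hv at this
    unfold zv
    split_ifs at * <;> omega
  refine ⟨Or.inl ⟨hm, hs, ?_, by omega⟩, fun p hp => Or.inl ⟨(I p hp).1, hs0 p hp, hc p hp,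
    by have := hzr p hp; omega, fun h => by have := hzr p hp; omega⟩⟩
  have h1 := sum_le1 (fun p => (L p).z) a (P.r + 1) (fun q hq => by have := hzr q hq; omega)
  have := C.zz
  simp only [hzv] at this
  simp at this h1
  unfold Par.zmin
  rw [hn]
  linarith

end
section
variable {n r : ℕ} {P : Par} {R : Fin r → ℕ} {L : Fin n → Loc} {V : Fin n → Fin r → Prop}

theorem QLead.hge {l : Loc} {V : Fin r → Prop}
    (h : QLead P l R V) (hY : 1 ≤ P.Y) : P.c - 1 - P.Y ≤ l.h := by
  rcases h with ⟨h1, h2, h3, h4⟩ | ⟨h1, h2, h3, h4, h5, h6⟩ <;> omega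

theorem QLead.sle {l : Loc} {V : Fin r → Prop} (h : QLead P l R V) : l.s ≤ P.n := by
  rcases h with ⟨h1, h2, h3, h4⟩ | ⟨h1, h2, h3, h4, h5, h6⟩ <;> omega

theorem QOther.s0 {l : Loc} {V : Fin r → Prop}
    (h : QOther P l R V) (hl : l.h < P.c + P.Y) : l.mode = .normal ∧ l.s = 0 := by
  rcases h with ⟨h1, h2, h3, h4, h5⟩ | ⟨h1, h2, h3, h4, h5, h6⟩ | ⟨h1, h2, h3, h4, h5, h6⟩
  · exact ⟨h1, h2⟩
  · omega
  · omega

theorem elec_step (hY : 1 ≤ P.Y) (hn : P.n = n) (hr : P.r = r) (C : Cons P R L)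
    (I : ∀ p, QElec P (L p)) (p : Fin n) (x : Fin r) {l l' : Loc} {y w : ℕ} (hl : L p = l)
    (hy : R x = y) (st : Step P l y l' w)
    (C' : Cons P (Function.update R x w) (Function.update L p l')) :
    (∀ q, QElec P (Function.update L p l' q)) ∨
      ∃ a, Inv2 P (Function.update R x w) (Function.update L p l') V a := by
  have Ip := I p
  rw [hl] at Ip
  obtain ⟨i1, i2, i3, i4, i5⟩ := Ip
  have key : (l'.mode = .leader ∧ l'.h = P.c - 1 ∧ l'.s = P.n ∧ 0 ≤ l'.z) ∨ QElec P l' := by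
    have hz : y = 0 → l.z < P.r := by
      intro h0
      have h1 := sum_ge1 (fun p => (L p).z) p 0 (fun q hq => (I q).2.2.1)
      have h2 := sum_room (fun x => zv (R x)) x (fun q => zv_nonneg _)
      have e : zv (R x) = 1 := by simp [zv, hy, h0]
      have := C.zz
      rw [hl] at h1
      rw [e] at h2
      linarith
    cases st with
    | claim h s z h0 =>
      simp only [post, QElec] at *
      split_ifs with hc
      · left; exact ⟨by trivial, hc.1, hc.2, by omega⟩
      · right; exact ⟨by trivial, by omega, by omega, by omega, hc⟩
    | tour h s z h0 => 
      have := hz rfl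
      simp only at this
      omega
    | drop h s z h0 =>
      simp only [QElec] at *
      right; exact ⟨by trivial, by omega, by omega, by omega, by omega⟩
    | emit h s z h0 h1 =>
      simp only [QElec] at *
      right; exact ⟨by trivial, by omega, by omega, by omega, by omega⟩
    | grab h s z h0 =>
      simp only [post, QElec] at *
      split_ifs with hc
      · left; exact ⟨by trivial, hc.1, hc.2, by omega⟩
      · right; exact ⟨by trivial, by omega, by omega, by omega, hc⟩
    | absorb h s z h0 =>
      simp only [post, QElec] at *
      split_ifs with hc
      · left; exact ⟨by trivial, hc.1, hc.2, by omega⟩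
      · right; exact ⟨by trivial, by omega, by omega, by omega, hc⟩
    | ups h s z => cases i1
    | downs h s z => cases i1
    | lemit h s z => cases i1
    | lfin h s z => cases i1
    | lgrab h s z => cases i1
    | fs h s z => cases i1
  rcases key with ⟨k1, k2, k3, k4⟩ | k
  · right
    refine ⟨p, elect hY hn hr C' p ?_ ?_ ?_ ?_ ?_⟩
    · simpa using k1
    · simpa using k2
    · simpa using k3
    · simpa using k4
    · intro q hq
      simpa [hq] using I q
  · left
    intro q
    by_cases hq : q = p
    · subst hq; simpa using k
    · simpa [hq] using I q

theorem inv2_other (hY : 1 ≤ P.Y) (hn : P.n = n) (hr : P.r = r) (C : Cons P R L) (a : Fin n)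
    (I : Inv2 P R L V a) (p : Fin n) (hpa : p ≠ a) (x : Fin r) (hV : V p x)
    {l l' : Loc} {y w : ℕ} (hl : L p = l)
    (hy : R x = y) (st : Step P l y l' w)
    (C' : Cons P (Function.update R x w) (Function.update L p l')) :
    Inv2 P (Function.update R x w) (Function.update L p l') V a := by
  obtain ⟨Ia, Io⟩ := I
  have Ip := Io p hpa
  rw [hl] at Ip
  have hge := fun q hq => (Io q hq).hge hY
  have hage := Ia.hge hY
  -- whenever a 3 is written, nobody else tours
  have k3 : w = 3 → (L a).h < P.c - 1 ∧ ∀ q, q ≠ a → q ≠ p → (L q).h < P.c + P.Y := by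
    intro hw
    cases st with
    | tour h s z h0 =>
      have e : hv P (R x) = P.Y := by simp [hv, hy]
      refine ⟨?_, fun q hq hqp => ?_⟩
      · have := slack1 hY C hge x
        omega
      · have := slack2 hY C hge x q hq
        omega
    | ups h s z =>
      rcases Ip with ⟨h1, h2, h3, h4, h5⟩ | ⟨h1, h2, h3, h4, h5, h6⟩ | ⟨h1, h2, h3, h4, h5, h6⟩
      · cases h1
      · simp only at h4
        refine ⟨?_, fun q hq hqp => ?_⟩
        · have := slack2 hY C hge x p hpa
          have := hv_nonneg hY (R x)
          rw [hl] at *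
          simp only at *
          omega
        · have := slack3 hY C hge q hq p hpa hqp
          rw [hl] at *
          simp only at *
          omega
      · cases h1
    | emit h s z h0 h1 =>
      rcases Ip with ⟨h1, h2, h3, h4, h5⟩ | ⟨h1, h2, h3, h4, h5, h6⟩ | ⟨h1, h2, h3, h4, h5, h6⟩
      · simp only at h2; omega
      · cases h1
      · cases h1
    | lfin h s z h0 =>
      rcases Ip with ⟨h1, _⟩ | ⟨h1, _⟩ | ⟨h1, _⟩ <;> cases h1
    | fs h s z =>
      rcases Ip with ⟨h1, _⟩ | ⟨h1, _⟩ | ⟨h1, _⟩ <;> cases h1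
    | _ => omega
  have lead : QLead P (L a) (Function.update R x w) (V a) := Ia.room x w (fun h => Or.inr (k3 h).1)
  have oth : ∀ q, q ≠ a → q ≠ p → QOther P (L q) (Function.update R x w) (V q) := by
    intro q hq hqp
    exact (Io q hq).room x w (fun h => Or.inr ((k3 h).2 q hq hqp))
  -- a completed tour
  have fl : l'.s ≤ - r → ∀ x', V p x' ∨ Function.update R x w x' = 3 := by
    intro hs x'
    right
    refine full2 (a := a) C' ?_ p hpa ?_ ?_ x'
    · intro q hq
      by_cases hqp : q = p
      · subst hqp; simp; omega
      · simpa [hqp] using (Io q hq).sle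
    · have := Ia.sle
      simp only [Function.update_of_ne hpa.symm]
      omega
    · simpa using hs
  refine ⟨by simpa [Function.update_of_ne hpa.symm] using lead, ?_⟩
  intro q hq
  by_cases hqp : q = p
  swap
  · simpa [hqp] using oth q hq hqp
  subst hqp
  simp only [Function.update_self]
  clear oth lead
  cases st with
  | claim h s z h0 =>
    rcases Ip with ⟨h1, h2, h3, h4, h5⟩ | ⟨h1, _⟩ | ⟨h1, _⟩
    · simp only [post] at *
      left
      refine ⟨if_neg (by omega), h2, ?_, ?_, ?_⟩
      · (try simp only); omega
      · (try simp only); omega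
      · (try simp only); omega
    · cases h1
    · cases h1
  | tour h s z h0 =>
    rcases Ip with ⟨h1, h2, h3, h4, h5⟩ | ⟨h1, _⟩ | ⟨h1, _⟩
    · simp only [post] at *
      -- no threes before
      have n3 : ∀ x, R x ≠ 3 := by
        have hlead : (L a).s = n := by
          have := (k3 (by trivial)).1
          rcases Ia with ⟨_, h2, _⟩ | ⟨_, _, _, h4, _⟩ <;> omega
        apply no_three C (a := a) _ (by omega)
        intro q' hq'
        by_cases hqp' : q' = q
        · subst hqp'; rw [hl]; simp only; omega
        · rw [((Io q' hq').s0 ((k3 (by trivial)).2 q' hq' hqp')).2]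
      have v3 : ∀ y, Function.update R x 3 y = 3 → V q y := by
        intro y hy
        by_cases hyx : y = x
        · subst hyx; exact hV
        · rw [Function.update_of_ne hyx] at hy
          exact absurd hy (n3 y)
      have hr1 : 1 ≤ P.r := by
        have := Fin.pos x
        omega
      by_cases hs : s - 1 = - P.r
      · right; right
        refine ⟨if_pos hs, ?_, ?_, ?_, ?_, ?_⟩
        · (try simp only); omega
        · (try simp only); omega
        · (try simp only); omega
        · (try simp only); omega
        · intro x'
          rcases fl (by omega) x' with h | h
          · exact h
          · exact v3 x' h
      · right; left
        refine ⟨if_neg hs, ?_, ?_, ?_, ?_, v3⟩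
        · (try simp only); omega
        · (try simp only); omega
        · (try simp only); omega
        · (try simp only); omega
    · cases h1
    · cases h1
  | drop h s z h0 =>
    rcases Ip with ⟨h1, h2, h3, h4, h5⟩ | ⟨h1, _⟩ | ⟨h1, _⟩
    · simp only at *
      left
      refine ⟨by trivial, h2, ?_, h4, h5⟩
      (try simp only); omega
    · cases h1
    · cases h1
  | emit h s z h0 h1 =>
    rcases Ip with ⟨h1, h2, h3, h4, h5⟩ | ⟨h1, _⟩ | ⟨h1, _⟩
    · simp only at *; omega
    · cases h1
    · cases h1
  | grab h s z h0 =>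
    rcases Ip with ⟨h1, h2, h3, h4, h5⟩ | ⟨h1, _⟩ | ⟨h1, _⟩
    · simp only at *; omega
    · cases h1
    · cases h1
  | absorb h s z h0 =>
    rcases Ip with ⟨h1, h2, h3, h4, h5⟩ | ⟨h1, _⟩ | ⟨h1, _⟩
    · simp only at *; omega
    · cases h1
    · cases h1
  | ups h s z =>
    rcases Ip with ⟨h1, _⟩ | ⟨h1, h2, h3, h4, h5, h6⟩ | ⟨h1, _⟩
    · cases h1
    · simp only [post] at *
      have v3 : ∀ y, Function.update R x 3 y = 3 → V q y := by
        intro y hy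
        by_cases hyx : y = x
        · subst hyx; exact hV
        · rw [Function.update_of_ne hyx] at hy
          exact h6 y hy
      by_cases hs : s - 1 = - P.r
      · right; right
        refine ⟨if_pos hs, ?_, ?_, h4, h5, ?_⟩
        · (try simp only); omega
        · (try simp only); omega
        · intro x'
          rcases fl (by omega) x' with h | h
          · exact h
          · exact v3 x' h
      · right; left
        refine ⟨if_neg hs, ?_, ?_, h4, h5, v3⟩
        · (try simp only); omega
        · (try simp only); omega
    · cases h1
  | downs h s z =>
    rcases Ip with ⟨h1, _⟩ | ⟨h1, _⟩ | ⟨h1, h2, h3, h4, h5, h6⟩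
    · cases h1
    · cases h1
    · simp only [post] at *
      by_cases hs : s + 1 = 0
      · left
        refine ⟨if_pos hs, hs, ?_, ?_, fun _ => h6⟩
        · (try simp only); omega
        · (try simp only); omega
      · right; right
        refine ⟨if_neg hs, ?_, ?_, h4, h5, h6⟩
        · (try simp only); omega
        · (try simp only); omega
  | lemit h s z => rcases Ip with ⟨h1, _⟩ | ⟨h1, _⟩ | ⟨h1, _⟩ <;> cases h1
  | lfin h s z => rcases Ip with ⟨h1, _⟩ | ⟨h1, _⟩ | ⟨h1, _⟩ <;> cases h1
  | lgrab h s z => rcases Ip with ⟨h1, _⟩ | ⟨h1, _⟩ | ⟨h1, _⟩ <;> cases h1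
  | fs h s z => rcases Ip with ⟨h1, _⟩ | ⟨h1, _⟩ | ⟨h1, _⟩ <;> cases h1

theorem inv2_lead (hY : 1 ≤ P.Y) (hn : P.n = n) (hr : P.r = r) (C : Cons P R L) (a : Fin n)
    (I : Inv2 P R L V a) (x : Fin r) (hV : V a x)
    {l l' : Loc} {y w : ℕ} (hl : L a = l)
    (hy : R x = y) (st : Step P l y l' w) :
    Inv2 P (Function.update R x w) (Function.update L a l') V a := by
  obtain ⟨Ia, Io⟩ := I
  rw [hl] at Ia
  have hge := fun q hq => (Io q hq).hge hY
  -- whenever a 3 is written, nobody else tours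
  have k3 : w = 3 → ∀ q, q ≠ a → (L q).h < P.c + P.Y := by
    intro hw q hq
    have := slack2 hY C hge x q hq
    have h0 := hv_nonneg hY (R x)
    rw [hl] at this
    cases st with
    | lfin h s z h0 => simp only at *; omega
    | fs h s z =>
      rcases Ia with ⟨h1, _⟩ | ⟨h1, h2, h3, h4, h5, h6⟩
      · cases h1
      · simp only at *; omega
    | tour h s z h0 => rcases Ia with ⟨h1, _⟩ | ⟨h1, _⟩ <;> cases h1
    | ups h s z => rcases Ia with ⟨h1, _⟩ | ⟨h1, _⟩ <;> cases h1
    | emit h s z => rcases Ia with ⟨h1, _⟩ | ⟨h1, _⟩ <;> cases h1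
    | _ => omega
  refine ⟨?_, ?_⟩
  swap
  · intro q hq
    simp only [Function.update_of_ne hq]
    exact (Io q hq).room x w (fun h => Or.inr (k3 h q hq))
  simp only [Function.update_self]
  have hr1 : 1 ≤ P.r := by
    have := Fin.pos x
    omega
  cases st with
  | lemit h s z h0 h1 =>
    rcases Ia with ⟨h1, h2, h3, h4⟩ | ⟨h1, _⟩
    · left
      simp only at *
      refine ⟨by trivial, h2, ?_, ?_⟩
      · (try simp only); omega
      · (try simp only); omega
    · cases h1
  | lfin h s z h0 h1 =>
    rcases Ia with ⟨h1, h2, h3, h4⟩ | ⟨h1, _⟩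
    · right
      simp only at *
      have n3 : ∀ x, R x ≠ 3 := by
        apply no_three C (a := a) _ (by rw [hl]; simp only; omega)
        intro q hq
        rw [((Io q hq).s0 (k3 (by trivial) q hq)).2]
      refine ⟨by trivial, ?_, ?_, ?_, ?_, ?_⟩
      · (try simp only); omega
      · (try simp only); omega
      · (try simp only); omega
      · (try simp only); omega
      · intro y hy
        by_cases hyx : y = x
        · subst hyx; exact hV
        · rw [Function.update_of_ne hyx] at hy
          exact absurd hy (n3 y)
    · cases h1
  | lgrab h s z =>
    rcases Ia with ⟨h1, h2, h3, h4⟩ | ⟨h1, _⟩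
    · left
      simp only at *
      refine ⟨by trivial, h2, h3, ?_⟩
      (try simp only); omega
    · cases h1
  | fs h s z =>
    rcases Ia with ⟨h1, _⟩ | ⟨h1, h2, h3, h4, h5, h6⟩
    · cases h1
    · right
      simp only at *
      have : s ≠ P.n - P.r := by
        intro hs
        have := full C (a := a) (fun q hq => (Io q hq).sle) (by rw [hl]; simp only; omega) x
        omega
      refine ⟨by trivial, ?_, ?_, h4, h5, ?_⟩
      · (try simp only); omega
      · (try simp only); omega
      · intro y hy
        by_cases hyx : y = x
        · subst hyx; exact hV
        · rw [Function.update_of_ne hyx] at hy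
          exact h6 y hy
  | claim h s z h0 => rcases Ia with ⟨h1, _⟩ | ⟨h1, _⟩ <;> cases h1
  | tour h s z h0 => rcases Ia with ⟨h1, _⟩ | ⟨h1, _⟩ <;> cases h1
  | drop h s z h0 => rcases Ia with ⟨h1, _⟩ | ⟨h1, _⟩ <;> cases h1
  | emit h s z h0 => rcases Ia with ⟨h1, _⟩ | ⟨h1, _⟩ <;> cases h1
  | grab h s z h0 => rcases Ia with ⟨h1, _⟩ | ⟨h1, _⟩ <;> cases h1
  | absorb h s z h0 => rcases Ia with ⟨h1, _⟩ | ⟨h1, _⟩ <;> cases h1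
  | ups h s z => rcases Ia with ⟨h1, _⟩ | ⟨h1, _⟩ <;> cases h1
  | downs h s z => rcases Ia with ⟨h1, _⟩ | ⟨h1, _⟩ <;> cases h1

theorem inv_step (hY : 1 ≤ P.Y) (hn : P.n = n) (hr : P.r = r) (I : Inv P R L V)
    (p : Fin n) (x : Fin r) (hV : V p x) {l' : Loc} {w : ℕ} (st : Step P (L p) (R x) l' w) :
    Inv P (Function.update R x w) (Function.update L p l') V := by
  have C' := cons_step I.cons p x st
  refine ⟨C', ?_⟩
  rcases I.ph with h | ⟨a, h⟩
  · exact elec_step hY hn hr I.cons h p x rfl rfl st C'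
  · right
    refine ⟨a, ?_⟩
    by_cases hp : p = a
    · subst hp
      exact inv2_lead hY hn hr I.cons p h x hV rfl rfl st
    · exact inv2_other hY hn hr I.cons a h p hp x hV rfl rfl st C'

theorem Inv.mono {W : Fin n → Fin r → Prop} (I : Inv P R L V) (hVW : ∀ p x, V p x → W p x) :
    Inv P R L W := by
  refine ⟨I.cons, ?_⟩
  rcases I.ph with h | ⟨a, h1, h2⟩
  · exact Or.inl h
  · exact Or.inr ⟨a, h1.mono (hVW a), fun p hp => (h2 p hp).mono (hVW p)⟩

/-- A declaring prisoner. -/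
def Done (P : Par) (l : Loc) : Prop := l.mode = .final ∧ l.s = P.n - P.r

theorem done_vis (hY : 1 ≤ P.Y) (hn : P.n = n) (hr : P.r = r) (I : Inv P R L V) (p : Fin n)
    (hd : Done P (L p)) : ∀ q x, V q x := by
  rcases I.ph with h | ⟨a, Ia, Io⟩
  · have := (h p).1
    rw [hd.1] at this
    cases this
  have hpa : p = a := by
    by_contra hpa
    rcases Io p hpa with ⟨h1, _⟩ | ⟨h1, _⟩ | ⟨h1, _⟩ <;> rw [hd.1] at h1 <;> cases h1
  subst hpa
  rcases Ia with ⟨h1, _⟩ | ⟨h1, h2, h3, h4, h5, h6⟩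
  · rw [hd.1] at h1
    cases h1
  have h3s : ∀ x, R x = 3 :=
    full I.cons (a := p) (fun q hq => (Io q hq).sle) (by rw [hd.2]; omega)
  have hge := fun q hq => (Io q hq).hge hY
  intro q x
  by_cases hq : q = p
  · subst hq; exact h6 x (h3s x)
  have hz : P.r + 1 ≤ (L q).z := by
    have e1 := sum_le2 (fun q => (L q).z) p q hq (P.r + 1) (fun q hq => (Io q hq).zle)
    have e2 := I.cons.zz
    simp only [h3s] at e2
    simp [zv] at e2 e1
    unfold Par.zmin at h5
    rw [hn] at h5
    linarith
  rcases Io q hq with ⟨h1, h2, h3, h4, h5⟩ | ⟨h1, h2, h3, h4, h5, h6⟩ | ⟨h1, h2, h3, h4, h5, h6⟩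
  · exact h5 (by omega) x
  · exact h6 x (h3s x)
  · exact h6 x

end
section
variable {n r : ℕ} {P : Par} {R : Fin r → ℕ} {L : Fin n → Loc} {V : Fin n → Fin r → Prop}

theorem noop_normal {l : Loc} {x : ℕ} (hm : l.mode = .normal) (h : (act P l x).1 = x) :
    (x = 0 → P.r < l.z) ∧ (x = 1 → l.h ≤ P.c ∧ (l.h = P.c → l.s ≤ 0)) ∧
      (x = 2 → P.c ≤ l.h) ∧ (x = 3 → P.c ≤ l.h) := by
  simp only [act, hm] at h
  split_ifs at h <;> simp only at h <;> omega

theorem noop_up {l : Loc} {x : ℕ} (hm : l.mode = .up) (h : (act P l x).1 = x) : x ≠ 1 := by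
  simp only [act, hm] at h
  split_ifs at h <;> simp only at h <;> omega

theorem noop_down {l : Loc} {x : ℕ} (hm : l.mode = .down) (h : (act P l x).1 = x) : x ≠ 3 := by
  simp only [act, hm] at h
  split_ifs at h <;> simp only at h <;> omega

theorem noop_final {l : Loc} {x : ℕ} (hm : l.mode = .final) (h : (act P l x).1 = x) : x ≠ 1 := by
  simp only [act, hm] at h
  split_ifs at h <;> simp only at h <;> omega

theorem noop_leader {l : Loc} {x : ℕ} (hm : l.mode = .leader) (h : (act P l x).1 = x) :
    x ≠ 2 ∧ (x = 1 → l.h ≠ P.c - 1) := by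
  simp only [act, hm] at h
  split_ifs at h <;> simp only at h <;> omega

theorem enabled_elec (hY : 1 ≤ P.Y) (hn : P.n = n) (hr : P.r = r) (hr0 : 0 < r)
    (C : Cons P R L) (I : ∀ p, QElec P (L p)) (hno : ∀ p x, (act P (L p) (R x)).1 = R x) :
    False := by
  have N := fun p x => noop_normal (I p).1 (hno p x)
  -- somebody is below `c`
  obtain ⟨p0, hp0⟩ : ∃ p, (L p).h < P.c := by
    by_contra hcon
    push Not at hcon
    have h1 : ∑ p : Fin n, P.c ≤ ∑ p, (L p).h := Finset.sum_le_sum (fun p _ => hcon p)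
    have h2 := Finset.sum_nonneg (s := Finset.univ) (f := fun x => hv P (R x))
      (fun q _ => hv_nonneg hY _)
    have := C.hh
    simp at h1
    linarith
  have r0 : ∀ x, R x ≠ 0 := by
    intro x hx
    have h0 := (N p0 x).1 hx
    have h1 := sum_ge1 (fun p => (L p).z) p0 0 (fun q hq => (I q).2.2.1)
    have h2 := sum_room (fun x => zv (R x)) x (fun q => zv_nonneg _)
    have := zv_nonneg (R x)
    have := C.zz
    linarith
  have r1 : ∀ x, R x = 1 := by
    intro x
    have h0 := r0 x
    have h2 := (N p0 x).2.2.1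
    have h3 := (N p0 x).2.2.2
    have := C.lt x
    omega
  have hle : ∀ p, (L p).h ≤ P.c := fun p => ((N p ⟨0, hr0⟩).2.1 (r1 _)).1
  have hs1 : ∀ p, (L p).h = P.c → (L p).s ≤ 0 := fun p => ((N p ⟨0, hr0⟩).2.1 (r1 _)).2
  have hh := C.hh
  have ss := C.ss
  simp [r1, hv] at hh
  simp [r1, sv] at ss
  have heq : ∀ q, q ≠ p0 → (L q).h = P.c := by
    intro q hq
    have := sum_le2 (fun p => (L p).h) p0 q hq P.c (fun p _ => hle p)
    have := hle q
    linarith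
  have h0 : (L p0).h = P.c - 1 := by
    have := sum_le1 (fun p => (L p).h) p0 P.c (fun p _ => hle p)
    linarith
  have s1 : ∑ q, (L q).s = (L p0).s := by
    have h1 := sum_le1 (fun p => (L p).s) p0 0 (fun q hq => hs1 q (heq q hq))
    have h2 := sum_ge1 (fun p => (L p).s) p0 0 (fun q hq => (I q).2.1)
    linarith
  exact (I p0).2.2.2.2 ⟨h0, by omega⟩

theorem exists_not_three {k : ℤ} (hk : ∑ x, sv (R x) = k) (h : k < r) : ∃ x, R x ≠ 3 := by
  by_contra hcon
  push Not at hcon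
  simp [hcon, sv] at hk
  omega

theorem exists_three {k : ℤ} (hk : ∑ x, sv (R x) = k) (h : 0 < k) : ∃ x, R x = 3 := by
  by_contra hcon
  push Not at hcon
  simp [hcon, sv] at hk
  omega

theorem enabled2 (hY : 1 ≤ P.Y) (hn : P.n = n) (hr : P.r = r) (hr0 : 0 < r)
    (C : Cons P R L) (a : Fin n) (I : Inv2 P R L V a) (hd : ∀ p, ¬ Done P (L p))
    (hno : ∀ p x, (act P (L p) (R x)).1 = R x) :
    False := by
  obtain ⟨Ia, Io⟩ := I
  have hge := fun q hq => (Io q hq).hge hY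
  have hage := Ia.hge hY
  have ss := C.ss
  -- if the slack is exhausted, all rooms are in states 1 and 3
  have r13 : ∀ p, p ≠ a → P.c + P.Y ≤ (L p).h → ∀ x, R x = 1 ∨ R x = 3 := by
    intro p hp hh x
    have h8 := slack2 hY C hge x p hp
    have := C.lt x
    unfold hv at h8
    split_ifs at h8 <;> omega
  have alone : ∀ p, p ≠ a → P.c + P.Y ≤ (L p).h → ∑ q, (L q).s = (L a).s + (L p).s := by
    intro p hp hh
    have e1 := sum_le2 (fun p => (L p).s) a p hp 0 (fun q hq => (Io q hq).sle)
    have e2 := sum_ge2 (Function.update (fun p => (L p).s) p 0) a p hp 0 (by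
      intro q hq
      by_cases hqp : q = p
      · subst hqp; simp
      · have := slack3 hY C hge q hq p hp hqp
        have := ((Io q hq).s0 (by omega)).2
        simp [hqp, this])
    have e3 := sum_upd (fun p => (L p).s) id p 0
    simp only [id] at e3
    rw [e3] at e2
    simp [Function.update_of_ne hp.symm] at e2
    linarith
  have lead_s : ∀ p, p ≠ a → P.c + P.Y ≤ (L p).h → (L a).s = n := by
    intro p hp hh
    have h1 := slack2 hY C hge ⟨0, hr0⟩ p hp
    have := hv_nonneg hY (R ⟨0, hr0⟩)
    rcases Ia with ⟨_, h2, _⟩ | ⟨_, _, _, h4, _⟩ <;> omega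
  -- nobody tours
  have nrm : ∀ p, p ≠ a → (L p).mode = .normal ∧ (L p).s = 0 := by
    intro p hp
    rcases Io p hp with ⟨h1, h2, h3, h4, h5⟩ | ⟨h1, h2, h3, h4, h5, h6⟩ | ⟨h1, h2, h3, h4, h5, h6⟩
    · exact ⟨h1, h2⟩
    · have e := alone p hp h4
      rw [lead_s p hp h4] at e
      obtain ⟨x, hx⟩ := exists_not_three (R := R) (k := - (L p).s) (by linarith) (by omega)
      have := noop_up h1 (hno p x)
      have := r13 p hp h4 x
      omega
    · have e := alone p hp h4
      rw [lead_s p hp h4] at e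
      obtain ⟨x, hx⟩ := exists_three (R := R) (k := - (L p).s) (by linarith) (by omega)
      exact absurd hx (noop_down h1 (hno p x))
  have sa : ∑ q, (L q).s = (L a).s := by
    have h1 := sum_le1 (fun p => (L p).s) a 0 (fun q hq => (nrm q hq).2.le)
    have h2 := sum_ge1 (fun p => (L p).s) a 0 (fun q hq => (nrm q hq).2.ge)
    linarith
  rcases Ia with ⟨h1, h2, h3, h4⟩ | ⟨h1, h2, h3, h4, h5, h6⟩
  · have n3 := no_three C (a := a) (fun q hq => (nrm q hq).2.ge) (by omega)
    have n2 := fun x => (noop_leader h1 (hno a x)).1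
    have n0 : ∀ x, R x ≠ 0 := by
      intro x hx
      have hz : ∀ q, q ≠ a → P.r + 1 ≤ (L q).z := by
        intro q hq
        have := (noop_normal (nrm q hq).1 (hno q x)).1 hx
        omega
      have e1 := sum_ge1 (fun p => (L p).z) a (P.r + 1) hz
      have e2 := sum_room (fun x => zv (R x)) x (fun q => zv_nonneg _)
      have e : zv (R x) = 1 := by simp [zv, hx]
      have := C.zz
      unfold Par.zmin at h3
      rw [hn] at h3
      linarith
    have r1 : ∀ x, R x = 1 := by
      intro x
      have := n3 x
      have := n2 x
      have := n0 x
      have := C.lt x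
      omega
    have hle : ∀ q, q ≠ a → (L q).h ≤ P.c := fun q hq =>
      ((noop_normal (nrm q hq).1 (hno q ⟨0, hr0⟩)).2.1 (r1 _)).1
    have hh := C.hh
    simp [r1, hv] at hh
    have e1 := sum_le1 (fun p => (L p).h) a P.c hle
    have e2 := sum_ge1 (fun p => (L p).h) a P.c hge
    exact (noop_leader h1 (hno a ⟨0, hr0⟩)).2 (r1 _) (by linarith)
  · have : (L a).s ≠ P.n - P.r := fun h => hd a ⟨h1, h⟩
    obtain ⟨x, hx⟩ := exists_not_three (R := R) (k := n - (L a).s) (by linarith) (by omega)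
    have h7 := noop_final h1 (hno a x)
    have h8 := slack1 hY C hge x
    have := C.lt x
    unfold hv at h8
    split_ifs at h8 <;> omega

theorem enabled (hY : 1 ≤ P.Y) (hn : P.n = n) (hr : P.r = r) (hr0 : 0 < r)
    (I : Inv P R L V) (hd : ∀ p, ¬ Done P (L p)) : ∃ p x, (act P (L p) (R x)).1 ≠ R x := by
  by_contra hcon
  push Not at hcon
  rcases I.ph with h | ⟨a, h⟩
  · exact enabled_elec hY hn hr hr0 I.cons h hcon
  · exact enabled2 hY hn hr hr0 I.cons a h hd hcon

/-- Local bounds needed for the measure. -/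
def WF (P : Par) (l : Loc) : Prop :=
  match l.mode with
  | .normal => 0 ≤ l.s
  | .up => -P.r ≤ l.s
  | .down => l.s < 0
  | .leader => P.zmin ≤ l.z
  | .final => P.n - P.r ≤ l.s

theorem Inv.wf (I : Inv P R L V) (p : Fin n) : WF P (L p) := by
  unfold WF
  rcases I.ph with h | ⟨a, h1, h2⟩
  · rw [(h p).1]
    exact (h p).2.1
  · by_cases hp : p = a
    · subst hp
      rcases h1 with ⟨h1, h2, h3, h4⟩ | ⟨h1, h2, h3, h4, h5, h6⟩ <;> rw [h1] <;> simp only <;> omega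
    · rcases h2 p hp with ⟨h1, h2, h3, h4, h5⟩ | ⟨h1, h2, h3, h4, h5, h6⟩ | ⟨h1, h2, h3, h4, h5, h6⟩
        <;> rw [h1] <;> simp only <;> omega

def f1 (l : Loc) : ℕ := match l.mode with
  | .normal => 2
  | .up => 2
  | .down => 2
  | .leader => 1
  | .final => 0
def f2 (P : Par) (l : Loc) : ℕ := match l.mode with
  | .leader => (l.z - P.zmin).toNat
  | _ => 0
def g3 (x : ℕ) : ℕ := if x = 0 then 1 else 0
def f4 (P : Par) (l : Loc) : ℕ := match l.mode with
  | .up => (2 * P.r + 2 + l.s).toNat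
  | .down => (-l.s).toNat
  | .final => (l.s - P.n + P.r + 1).toNat
  | _ => 0
def f5 (P : Par) (l : Loc) : ℕ := (l.h - P.c).natAbs
def f6 (P : Par) (l : Loc) : ℕ := match l.mode with
  | .normal => if P.c ≤ l.h then 2 * l.s.toNat else 0
  | _ => 0
def g6 (x : ℕ) : ℕ := if x = 3 then 1 else 0

/-- The lexicographic measure. -/
abbrev M6 := ℕ ×ₗ ℕ ×ₗ ℕ ×ₗ ℕ ×ₗ ℕ ×ₗ ℕ

def mk6 (a b c d e f : ℕ) : M6 := toLex (a, toLex (b, toLex (c, toLex (d, toLex (e, f)))))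

theorem mk6_lt {a b c d e f a' b' c' d' e' f' : ℕ}
    (h : a < a' ∨ a = a' ∧ (b < b' ∨ b = b' ∧ (c < c' ∨ c = c' ∧ (d < d' ∨ d = d' ∧
      (e < e' ∨ e = e' ∧ f < f'))))) : mk6 a b c d e f < mk6 a' b' c' d' e' f' := by
  simpa [mk6, Prod.Lex.toLex_lt_toLex] using h

def meas (P : Par) (R : Fin r → ℕ) (L : Fin n → Loc) : M6 :=
  mk6 (∑ p, f1 (L p)) (∑ p, f2 P (L p)) (∑ x, g3 (R x)) (∑ p, f4 P (L p)) (∑ p, f5 P (L p))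
    (∑ p, f6 P (L p) + ∑ x, g6 (R x))

theorem local_dec {l l' : Loc} {x w : ℕ} (hr : 0 ≤ P.r) (hw : WF P l) (st : Step P l x l' w)
    (hl : l.mode = .leader → x = 2 → l.h < P.c) :
    f1 l' < f1 l ∨ f1 l' = f1 l ∧ (f2 P l' < f2 P l ∨ f2 P l' = f2 P l ∧ (g3 w < g3 x ∨
      g3 w = g3 x ∧ (f4 P l' < f4 P l ∨ f4 P l' = f4 P l ∧ (f5 P l' < f5 P l ∨ f5 P l' = f5 P l ∧
        f6 P l' + g6 w < f6 P l + g6 x)))) := by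
  cases st <;> simp only [WF] at hw <;> simp only [post, f1, f2, g3, f4, f5, f6, g6] <;>
    simp only [true_imp_iff, reduceIte, one_ne_zero, OfNat.ofNat_ne_zero, OfNat.one_ne_ofNat, OfNat.zero_ne_ofNat, zero_ne_one,
      Nat.reduceEqDiff] at hl ⊢ <;> (try split_ifs) <;> (try simp only) <;>
      (try split_ifs) <;>
      simp only [true_and, false_and, or_false, lt_self_iff_false, false_or, add_zero] <;>
      first | omega | (split_ifs <;> omega) | (split <;> omega) | grind

theorem meas_dec (hY : 1 ≤ P.Y) (hr : P.r = r) (I : Inv P R L V) (p : Fin n) (x : Fin r) {l' : Loc} {w : ℕ}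
    (st : Step P (L p) (R x) l' w) :
    meas P (Function.update R x w) (Function.update L p l') < meas P R L := by
  have hd := local_dec (by omega) (I.wf p) st (by
    intro hm hx
    rcases I.ph with h | ⟨a, Ia, Io⟩
    · rw [(h p).1] at hm
      cases hm
    · have hpa : p = a := by
        by_contra hp
        rcases Io p hp with h | h | h <;> (rw [h.1] at hm; cases hm)
      subst hpa
      have := slack1 hY I.cons (fun q hq => (Io q hq).hge hY) x
      simp [hv, hx] at this
      omega)
  have e1 := sum_upd_nat L f1 p l'
  have e2 := sum_upd_nat L (f2 P) p l'
  have e3 := sum_upd_nat R g3 x w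
  have e4 := sum_upd_nat L (f4 P) p l'
  have e5 := sum_upd_nat L (f5 P) p l'
  have e6 := sum_upd_nat L (f6 P) p l'
  have e7 := sum_upd_nat R g6 x w
  apply mk6_lt
  omega

end
section

/-- The initial local state. -/
def init0 : Loc := ⟨0, 1, 0, .normal⟩

noncomputable def locOf (P : Par) (H : List ℕ) : Loc :=
  H.foldl (fun l x => (stepL P l x).1) init0

open Classical in
/-- The strategy. -/
noncomputable def strat (P : Par) : Strategy := fun H x =>
  ((stepL P (locOf P H) x).2, decide (Done P (stepL P (locOf P H) x).1))

theorem strat_valid (P : Par) (q : ℕ) : (strat P).ValidFor (q + 4) := by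
  intro H s _ hs
  show (stepL P (locOf P H) s).2 < q + 4
  rcases stepL_cases P (locOf P H) s with h | h
  · rw [h]; exact hs
  · have := (step_conserve h).2.2.2.2
    omega

variable {n r : ℕ} {P : Par}

noncomputable def RR (P : Par) (sched : Schedule n r) (t : ℕ) : Fin r → ℕ :=
  (run (fun _ => strat P) sched t).1

noncomputable def LL (P : Par) (sched : Schedule n r) (t : ℕ) : Fin n → Loc := fun p =>
  locOf P ((run (fun _ => strat P) sched t).2 p)

def VV (sched : Schedule n r) (t : ℕ) : Fin n → Fin r → Prop := fun p x =>
  ∃ s < t, sched s = (p, x)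

theorem RR_succ (sched : Schedule n r) (t : ℕ) : RR P sched (t + 1) =
    Function.update (RR P sched t) (sched t).2
      (stepL P (LL P sched t (sched t).1) (RR P sched t (sched t).2)).2 := rfl

theorem LL_succ (sched : Schedule n r) (t : ℕ) : LL P sched (t + 1) =
    Function.update (LL P sched t) (sched t).1
      (stepL P (LL P sched t (sched t).1) (RR P sched t (sched t).2)).1 := by
  funext p
  by_cases hp : p = (sched t).1
  · subst hp
    rw [Function.update_self]
    show locOf P ((Function.update _ _ _ : Fin n → List ℕ) _) = _
    rw [Function.update_self]
    unfold locOf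
    rw [List.foldl_append]
    rfl
  · rw [Function.update_of_ne hp]
    show locOf P ((Function.update _ _ _ : Fin n → List ℕ) _) = _
    rw [Function.update_of_ne hp]
    rfl

/-- One time step either changes nothing or is an effective step. -/
theorem dich (sched : Schedule n r) (t : ℕ) :
    (RR P sched (t + 1) = RR P sched t ∧ LL P sched (t + 1) = LL P sched t) ∨
    ∃ l' w, Step P (LL P sched t (sched t).1) (RR P sched t (sched t).2) l' w ∧
      RR P sched (t + 1) = Function.update (RR P sched t) (sched t).2 w ∧
      LL P sched (t + 1) = Function.update (LL P sched t) (sched t).1 l' := by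
  rw [RR_succ, LL_succ]
  rcases stepL_cases P (LL P sched t (sched t).1) (RR P sched t (sched t).2) with h | h
  · left
    rw [h]
    simp
  · exact Or.inr ⟨_, _, h, rfl, rfl⟩

theorem inv0 (hY : 1 ≤ P.Y) (hn : P.n = n) (hr : P.r = r) (hr0 : 0 < r)
    (hc : P.n * P.c = P.r * P.Y + 1) (sched : Schedule n r) :
    Inv P (RR P sched 0) (LL P sched 0) (VV sched 0) := by
  have e1 : RR P sched 0 = fun _ => 0 := rfl
  have e2 : LL P sched 0 = fun _ => init0 := rfl
  rw [e1, e2]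
  refine ⟨⟨fun x => by simp, ?_, ?_, ?_⟩, Or.inl fun p => ⟨rfl, by simp [init0], by simp [init0],
    by simp [init0], ?_⟩⟩
  · simp [init0, hv]
    rw [← hn, ← hr]; linarith
  · simp [init0, sv]
  · simp [init0, zv]
  · rintro ⟨h1, h2⟩
    simp only [init0] at h1 h2
    rw [← h2] at hc
    have : 0 < P.r * P.Y := mul_pos (by omega) (by omega)
    linarith

theorem inv_all (hY : 1 ≤ P.Y) (hn : P.n = n) (hr : P.r = r) (hr0 : 0 < r)
    (hc : P.n * P.c = P.r * P.Y + 1) (sched : Schedule n r) (t : ℕ) :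
    Inv P (RR P sched t) (LL P sched t) (VV sched t) := by
  induction t with
  | zero => exact inv0 hY hn hr hr0 hc sched
  | succ t ih =>
    have ih' : Inv P (RR P sched t) (LL P sched t) (VV sched (t + 1)) :=
      ih.mono (fun p x ⟨s, hs, h⟩ => ⟨s, by omega, h⟩)
    rcases dich (P := P) sched t with ⟨h1, h2⟩ | ⟨l', w, st, h1, h2⟩
    · rw [h1, h2]; exact ih'
    · rw [h1, h2]
      exact inv_step hY hn hr ih' _ _ ⟨t, by omega, rfl⟩ st

theorem declares_iff (sched : Schedule n r) (t : ℕ) :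
    declaresAt (fun _ => strat P) sched t ↔ Done P (LL P sched (t + 1) (sched t).1) := by
  rw [LL_succ, Function.update_self]
  unfold declaresAt
  simp only [strat, decide_eq_true_eq]
  rfl

theorem live (hY : 1 ≤ P.Y) (hn : P.n = n) (hr : P.r = r) (hr0 : 0 < r)
    (hc : P.n * P.c = P.r * P.Y + 1) (sched : Schedule n r) (hf : sched.Fair) :
    ∃ t, declaresAt (fun _ => strat P) sched t := by
  by_contra hcon
  push Not at hcon
  have nd : ∀ t p, ¬ Done P (LL P sched t p) := by
    intro t
    induction t with
    | zero =>
      intro p h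
      have h1 : init0.mode = Mode.final := h.1
      cases h1
    | succ t ih =>
      intro p h
      by_cases hp : p = (sched t).1
      · subst hp
        exact hcon t ((declares_iff sched t).2 h)
      · rw [LL_succ, Function.update_of_ne hp] at h
        exact ih p h
  have key : ∀ m : M6, ∀ t, meas P (RR P sched t) (LL P sched t) = m → False := by
    intro m
    induction m using WellFoundedLT.induction with
    | ind m ih =>
    intro t ht
    have I := fun t => inv_all hY hn hr hr0 hc sched t
    obtain ⟨p, x, hpx⟩ := enabled hY hn hr hr0 (I t) (nd t)
    have const : ∀ k, RR P sched (t + k) = RR P sched t ∧ LL P sched (t + k) = LL P sched t := by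
      intro k
      induction k with
      | zero => exact ⟨rfl, rfl⟩
      | succ k ihk =>
        rcases dich (P := P) sched (t + k) with ⟨h1, h2⟩ | ⟨l', w, st, h1, h2⟩
        · exact ⟨h1.trans ihk.1, h2.trans ihk.2⟩
        · exfalso
          have := meas_dec hY hr (I (t + k)) _ _ st
          rw [← h1, ← h2, ihk.1, ihk.2, ht] at this
          exact ih _ this _ rfl
    obtain ⟨t', ht', hlt⟩ := (hf p x).exists_gt t
    obtain ⟨k, rfl⟩ := Nat.exists_eq_add_of_lt hlt
    have c1 := const (k + 1)
    have c2 := (const (k + 1 + 1)).1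
    rw [← c1.1] at c2
    rw [show t + (k + 1 + 1) = t + (k + 1) + 1 by ring, RR_succ,
      show sched (t + (k + 1)) = (p, x) from ht'] at c2
    have c3 := congrFun c2 x
    simp only [Function.update_self] at c3
    rw [c1.1, c1.2] at c3
    simp [stepL, hpx] at c3
  exact key _ 0 rfl

theorem winning (hY : 1 ≤ P.Y) (hn : P.n = n) (hr : P.r = r)
    (hc : P.n * P.c = P.r * P.Y + 1) : Winning (n := n) (r := r) (fun _ => strat P) := by
  intro sched hf
  have hr0 : 0 < r := (sched 0).2.pos
  refine ⟨live hY hn hr hr0 hc sched hf, fun t ht p x => ?_⟩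
  obtain ⟨s, hs, h⟩ := done_vis hY hn hr (inv_all hY hn hr hr0 hc sched (t + 1)) _
    ((declares_iff sched t).1 ht) p x
  exact ⟨s, by omega, h⟩

end
section

/-- Cyclic shift. -/
def shift (n a : ℕ) (p : Fin n) : Fin n := ⟨(p + a) % n, Nat.mod_lt _ p.pos⟩

theorem shift_iter (n a k : ℕ) (p : Fin n) : (((shift n a)^[k] p : Fin n) : ℕ) = (p + k * a) % n := by
  induction k with
  | zero => simp [Nat.mod_eq_of_lt p.isLt]
  | succ k ih =>
    rw [Function.iterate_succ_apply']
    simp only [shift, ih]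
    rw [Nat.mod_add_mod]
    congr 1; ring

theorem shift_full {n a d : ℕ} (h : n = d * a) (p : Fin n) : (shift n a)^[d] p = p := by
  apply Fin.ext
  rw [shift_iter, ← h, Nat.add_mod_right, Nat.mod_eq_of_lt p.isLt]

theorem shift_ne {n a d k : ℕ} (h : n = d * a) (hk : 0 < k) (hkd : k < d) (p : Fin n) :
    (shift n a)^[k] p ≠ p := by
  intro e
  have e1 := congrArg Fin.val e
  rw [shift_iter] at e1
  have e2 : (p + k * a : ℕ) ≡ p + 0 [MOD n] := by
    unfold Nat.ModEq
    rw [e1, add_zero, Nat.mod_eq_of_lt p.isLt]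
  have e3 := (Nat.modEq_zero_iff_dvd).1 (Nat.ModEq.add_left_cancel' _ e2)
  have ha : 0 < a := by
    rcases Nat.eq_zero_or_pos a with h0 | h0
    · subst h0
      have := p.pos
      omega
    · exact h0
  rw [h] at e3
  have := Nat.le_of_dvd hk (Nat.dvd_of_mul_dvd_mul_right ha e3)
  omega

theorem iter_ne {α : Type*} {f : α → α} {d : ℕ} (h1 : ∀ p, f^[d] p = p)
    (h2 : ∀ k, 0 < k → k < d → ∀ p, f^[k] p ≠ p) {i j : ℕ} (hij : j < i) (hi : i < d) (p : α) :
    f^[i] p ≠ f^[j] p := by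
  intro e
  have : i = (i - j) + j := by omega
  rw [this, Function.iterate_add_apply] at e
  exact h2 (i - j) (by omega) (by omega) _ e

theorem orbit_iff {α : Type*} {f : α → α} {d : ℕ} (hd : 0 < d) (h1 : ∀ p, f^[d] p = p) (p q : α) :
    (∃ j < d, f q = f^[j] p) ↔ ∃ j < d, q = f^[j] p := by
  have hd' : d = (d - 1) + 1 := by omega
  have inj : Function.Injective f := by
    intro u v huv
    rw [← h1 u, ← h1 v, hd', Function.iterate_succ_apply, Function.iterate_succ_apply, huv]
  constructor
  · rintro ⟨j, hj, e⟩
    rcases Nat.eq_zero_or_pos j with h0 | h0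
    · subst h0
      refine ⟨d - 1, by omega, inj ?_⟩
      rw [e, ← Function.iterate_succ_apply' f, ← Nat.add_one, ← hd', h1]
      rfl
    · refine ⟨j - 1, by omega, inj ?_⟩
      rw [e, ← Function.iterate_succ_apply' f]
      congr 2
      omega
  · rintro ⟨j, hj, rfl⟩
    by_cases hjd : j + 1 < d
    · exact ⟨j + 1, hjd, (Function.iterate_succ_apply' f j p).symm⟩
    · refine ⟨0, hd, ?_⟩
      rw [← Function.iterate_succ_apply' f, show j.succ = d by omega, h1]
      rfl

theorem iter_inv {α β : Type*} {f : α → α} {R : α → β} (h : ∀ x, R (f x) = R x) (k : ℕ) (x : α) :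
    R (f^[k] x) = R x := by
  induction k with
  | zero => rfl
  | succ k ih => rw [Function.iterate_succ_apply', h, ih]

variable {n r : ℕ}

/-- The symmetric schedule. -/
def symSched (f : Fin n → Fin n) (g : Fin r → Fin r) (d : ℕ) (e : ℕ → Fin n × Fin r) :
    Schedule n r := fun t => (f^[t % d] (e (t / d)).1, g^[t % d] (e (t / d)).2)

theorem symSched_apply (f : Fin n → Fin n) (g : Fin r → Fin r) {d : ℕ} (e : ℕ → Fin n × Fin r)
    (m i : ℕ) (hi : i < d) : symSched f g d e (d * m + i) = (f^[i] (e m).1, g^[i] (e m).2) := by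
  have h1 : (d * m + i) % d = i := by rw [Nat.mul_add_mod, Nat.mod_eq_of_lt hi]
  have h2 : (d * m + i) / d = m := by
    rw [Nat.mul_add_div (by omega), Nat.div_eq_of_lt hi, add_zero]
  unfold symSched
  rw [h1, h2]

open Classical in
theorem block (σ : Strategy) {f : Fin n → Fin n} {g : Fin r → Fin r} {d : ℕ}
    (e : ℕ → Fin n × Fin r)
    (f1 : ∀ p, f^[d] p = p) (f2 : ∀ k, 0 < k → k < d → ∀ p, f^[k] p ≠ p)
    (g1 : ∀ p, g^[d] p = p) (g2 : ∀ k, 0 < k → k < d → ∀ p, g^[k] p ≠ p) (m : ℕ)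
    {R : Fin r → ℕ} {H : Fin n → List ℕ}
    (hrun : run (fun _ => σ) (symSched f g d e) (d * m) = (R, H))
    (hR : ∀ x, R (g x) = R x) (hH : ∀ p, H (f p) = H p) (i : ℕ) (hi : i ≤ d) :
    run (fun _ => σ) (symSched f g d e) (d * m + i) =
      (fun x => if ∃ j < i, x = g^[j] (e m).2 then (σ (H (e m).1) (R (e m).2)).1 else R x,
       fun p => if ∃ j < i, p = f^[j] (e m).1 then H p ++ [R (e m).2] else H p) := by
  induction i with
  | zero => simpa using hrun
  | succ i ih =>
    have hr := ih (by omega)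
    rw [← add_assoc, run, hr, symSched_apply f g e m i (by omega)]
    have n1 : ¬ ∃ j < i, g^[i] (e m).2 = g^[j] (e m).2 := by
      rintro ⟨j, hj, h⟩
      exact iter_ne g1 g2 hj (by omega) _ h
    have n2 : ¬ ∃ j < i, f^[i] (e m).1 = f^[j] (e m).1 := by
      rintro ⟨j, hj, h⟩
      exact iter_ne f1 f2 hj (by omega) _ h
    simp only [if_neg n1, if_neg n2, iter_inv hR, iter_inv hH]
    refine Prod.ext ?_ ?_
    · funext x
      by_cases hx : x = g^[i] (e m).2
      · subst hx
        simp only [Function.update_self]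
        rw [if_pos ⟨i, by omega, rfl⟩]
      · simp only [Function.update_of_ne hx]
        congr 1
        apply propext
        constructor
        · rintro ⟨j, hj, h⟩
          exact ⟨j, by omega, h⟩
        · rintro ⟨j, hj, h⟩
          refine ⟨j, ?_, h⟩
          rcases Nat.lt_succ_iff_lt_or_eq.1 hj with h' | h'
          · exact h'
          · subst h'; exact absurd h hx
    · funext x
      by_cases hx : x = f^[i] (e m).1
      · subst hx
        simp only [Function.update_self]
        rw [if_pos ⟨i, by omega, rfl⟩, iter_inv hH]
      · simp only [Function.update_of_ne hx]
        congr 1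
        apply propext
        constructor
        · rintro ⟨j, hj, h⟩
          exact ⟨j, by omega, h⟩
        · rintro ⟨j, hj, h⟩
          refine ⟨j, ?_, h⟩
          rcases Nat.lt_succ_iff_lt_or_eq.1 hj with h' | h'
          · exact h'
          · subst h'; exact absurd h hx

theorem sym_run (σ : Strategy) {f : Fin n → Fin n} {g : Fin r → Fin r} {d : ℕ} (hd : 0 < d)
    (e : ℕ → Fin n × Fin r)
    (f1 : ∀ p, f^[d] p = p) (f2 : ∀ k, 0 < k → k < d → ∀ p, f^[k] p ≠ p)
    (g1 : ∀ p, g^[d] p = p) (g2 : ∀ k, 0 < k → k < d → ∀ p, g^[k] p ≠ p) (m : ℕ) :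
    (∀ x, (run (fun _ => σ) (symSched f g d e) (d * m)).1 (g x) =
      (run (fun _ => σ) (symSched f g d e) (d * m)).1 x) ∧
    (∀ x, (run (fun _ => σ) (symSched f g d e) (d * m)).2 (f x) =
      (run (fun _ => σ) (symSched f g d e) (d * m)).2 x) := by
  induction m with
  | zero => exact ⟨fun x => rfl, fun x => rfl⟩
  | succ m ih =>
    have := block σ e f1 f2 g1 g2 m rfl ih.1 ih.2 d le_rfl
    rw [Nat.mul_succ, this]
    constructor
    · intro x
      simp only [orbit_iff hd g1, ih.1]
    · intro x
      simp only [orbit_iff hd f1, ih.2]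

theorem sym_declares (σ : Strategy) {f : Fin n → Fin n} {g : Fin r → Fin r} {d : ℕ} (hd : 0 < d)
    (e : ℕ → Fin n × Fin r)
    (f1 : ∀ p, f^[d] p = p) (f2 : ∀ k, 0 < k → k < d → ∀ p, f^[k] p ≠ p)
    (g1 : ∀ p, g^[d] p = p) (g2 : ∀ k, 0 < k → k < d → ∀ p, g^[k] p ≠ p) (m i : ℕ) (hi : i < d) :
    declaresAt (fun _ => σ) (symSched f g d e) (d * m + i) ↔
      declaresAt (fun _ => σ) (symSched f g d e) (d * m) := by
  have hs := sym_run σ hd e f1 f2 g1 g2 m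
  have := block σ e f1 f2 g1 g2 m rfl hs.1 hs.2 i hi.le
  have n1 : ¬ ∃ j < i, g^[i] (e m).2 = g^[j] (e m).2 := by
    rintro ⟨j, hj, h⟩
    exact iter_ne g1 g2 hj (by omega) _ h
  have n2 : ¬ ∃ j < i, f^[i] (e m).1 = f^[j] (e m).1 := by
    rintro ⟨j, hj, h⟩
    exact iter_ne f1 f2 hj (by omega) _ h
  have s0 := symSched_apply f g e m 0 hd
  rw [add_zero] at s0
  unfold declaresAt
  rw [symSched_apply f g e m i hi, s0, this]
  simp only [if_neg n1, if_neg n2, iter_inv hs.1, iter_inv hs.2, Function.iterate_zero, id]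

theorem coprime_of_election (hn : 0 < n) (hr : 0 < r) (σ : Strategy)
    (h : IsLeaderElection n r σ) : Nat.Coprime n r := by
  by_contra hco
  set d := Nat.gcd n r with hdd
  have hd0 : 0 < d := Nat.gcd_pos_of_pos_left _ hn
  have hd : 1 < d := by
    have : d ≠ 1 := hco
    omega
  obtain ⟨a, ha⟩ := Nat.gcd_dvd_left n r
  obtain ⟨b, hb⟩ := Nat.gcd_dvd_right n r
  rw [← hdd] at ha hb
  have hnr : 0 < n * r := Nat.mul_pos hn hr
  set e : ℕ → Fin n × Fin r := fun m => finProdFinEquiv.symm ⟨m % (n * r), Nat.mod_lt _ hnr⟩ with he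
  have f1 := shift_full ha
  have f2 : ∀ k, 0 < k → k < d → ∀ p, (shift n a)^[k] p ≠ p := fun k h1 h2 p => shift_ne ha h1 h2 p
  have g1 := shift_full hb
  have g2 : ∀ k, 0 < k → k < d → ∀ p, (shift r b)^[k] p ≠ p := fun k h1 h2 p => shift_ne hb h1 h2 p
  have fair : (symSched (shift n a) (shift r b) d e).Fair := by
    intro p x
    set k0 := finProdFinEquiv (p, x) with hk0
    refine Set.infinite_of_injective_forall_mem
      (f := fun k : ℕ => d * (n * r * k + k0)) ?_ ?_
    · intro k k' hk
      have := Nat.eq_of_mul_eq_mul_left hd0 hk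
      exact Nat.eq_of_mul_eq_mul_left hnr (Nat.add_right_cancel this)
    · intro k
      have s0 := symSched_apply (shift n a) (shift r b) e (n * r * k + k0) 0 hd0
      rw [add_zero] at s0
      show symSched (shift n a) (shift r b) d e (d * (n * r * k + k0)) = (p, x)
      rw [s0]
      have : e (n * r * k + k0) = (p, x) := by
        simp only [he]
        rw [Equiv.symm_apply_eq, ← hk0]
        apply Fin.ext
        simp [Nat.mod_eq_of_lt k0.isLt]
      rw [this]
      rfl
  obtain ⟨p, ⟨t, ht, hdec⟩, huniq⟩ := h _ fair
  have hi : t % d < d := Nat.mod_lt _ hd0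
  have hdec0 : declaresAt (fun _ => σ) (symSched (shift n a) (shift r b) d e) (d * (t / d)) := by
    rw [← Nat.div_add_mod t d] at hdec
    exact (sym_declares σ hd0 e f1 f2 g1 g2 (t / d) (t % d) hi).1 hdec
  have all : ∀ i < d, (shift n a)^[i] (e (t / d)).1 = p := by
    intro i hi
    apply huniq
    refine ⟨d * (t / d) + i, ?_, (sym_declares σ hd0 e f1 f2 g1 g2 (t / d) i hi).2 hdec0⟩
    rw [symSched_apply _ _ e _ i hi]
  exact iter_ne f1 f2 zero_lt_one hd _ ((all 1 hd).trans (all 0 hd0).symm)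

theorem exists_param (hn : 0 < n) (hco : Nat.Coprime n r) :
    ∃ Y c : ℤ, 1 ≤ Y ∧ (n : ℤ) * c = r * Y + 1 := by
  have hb := Nat.gcd_eq_gcd_ab n r
  rw [hco] at hb
  refine ⟨- Nat.gcdB n r + n * (|Nat.gcdB n r| + 1),
    Nat.gcdA n r + r * (|Nat.gcdB n r| + 1), ?_, ?_⟩
  · have h1 := le_abs_self (Nat.gcdB n r)
    have h2 := abs_nonneg (Nat.gcdB n r)
    have h3 : (1 : ℤ) ≤ n := by exact_mod_cast hn
    nlinarith
  · push_cast at hb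
    linear_combination (-1 : ℤ) * hb

end

theorem main (n r q : ℕ) (h : ∃ σ : Strategy, σ.ValidFor q ∧ IsLeaderElection n r σ) :
    HasSymmetricWinningStrategy n r (q + 4) := by
  obtain ⟨σ, -, h⟩ := h
  by_cases h0 : 0 < n ∧ 0 < r
  · obtain ⟨Y, c, hY, hc⟩ := exists_param h0.1 (coprime_of_election h0.1 h0.2 σ h)
    exact ⟨strat ⟨n, r, Y, c⟩, strat_valid _ _, winning hY rfl rfl hc⟩
  · refine ⟨fun _ s => (s, false), fun _ _ _ hs => hs, fun sched _ => ?_⟩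
    exact absurd ⟨(sched 0).1.pos, (sched 0).2.pos⟩ h0

end PrisonersGame.Proto

open PrisonersGame in
/-- If the prisoners have a symmetric leader-election strategy with `q` states,
then they have a symmetric winning strategy with `q + 4` states. -/
theorem symmetric_winning_of_leader_election (n r q : ℕ)
    (h : ∃ σ : Strategy, σ.ValidFor q ∧ IsLeaderElection n r σ) :
    HasSymmetricWinningStrategy n r (q + 4) := by
  exact PrisonersGame.Proto.main n r q h
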